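/- Let the BARRONS iterates x_1, …, x_T be as in the context with parameters 0 < β ≤ 1/2 and 0 < η ≤ 1. For any u ∈ Δ̄_N satisfying β ≤ α_T(u), where α_t(u) = min{1/2, min_{s∈[t]} 1/(8·|⟨∇_s, u − x_s⟩|)}, one has Σ_{t=1}^T f_t(x_t) − Σ_{t=1}^T f_t(u) ≤ Σ_{t=1}^T ( ⟨∇_t, x_t − x_{t+1}⟩ + D_{ψ_t}(u, x_t) − D_{ψ_t}(u, x_{t+1}) − (β/2)·⟨∇_t, x_t − u⟩² ). -/

import Mathlib

/-!
Both halves of the bound hold round by round. By Bernoulli's inequality for the exponent `2β ≤ 1`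
and the second-order Taylor bound for the logarithm, `f_t` lies above its linearization at `x_t`
by at least `(β / 2) ⟨∇_t, u - x_t⟩²`. The remaining linear loss `⟨∇_t, x_{t+1} - u⟩` is controlled
by the optimality condition of `x_{t+1}` on the convex set `Δ̄_N`: through the three-point identity
for Bregman divergences it becomes `D(u, x_t) - D(u, x_{t+1}) - D(x_{t+1}, x_t)`, whose last term is
nonpositive because `ψ_t` is convex.
-/

section Logarithm

theorem log_one_add_le_sub_sq_div_four {v : ℝ} (hv : |v| ≤ 1 / 4) :
    Real.log (1 + v) ≤ v - v ^ 2 / 4 := by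
  have htaylor := (abs_le.mp (Real.abs_log_sub_add_sum_range_le (x := -v)
    (by rw [abs_neg]; linarith) 3)).2
  have hrem : |v| ^ 4 / (1 - |v|) ≤ v ^ 2 / 12 := by
    rw [div_le_iff₀ (by linarith), ← sq_abs v]
    have hsq : |v| ^ 2 ≤ 1 / 16 := by nlinarith [abs_nonneg v]
    nlinarith [sq_nonneg |v|]
  have hcubic : v ^ 3 / 3 ≤ v ^ 2 / 12 := by
    nlinarith [sq_nonneg v, le_of_abs_le hv]
  norm_num [Finset.sum_range_succ] at htaylor
  linarith [sq_nonneg v]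

theorem log_one_sub_le_neg_sub_sq {β z : ℝ} (hβ0 : 0 < β) (hβ : β ≤ 1 / 2) (hz : z < 1)
    (hβz : 8 * β * |z| ≤ 1) : Real.log (1 - z) ≤ -z - β / 2 * z ^ 2 := by
  have hsmall : |-(2 * β * z)| ≤ 1 / 4 := by
    rw [abs_neg, abs_mul, abs_of_pos (by linarith : 0 < 2 * β)]
    linarith
  have hbernoulli : (1 - z) ^ (2 * β) ≤ 1 + -(2 * β * z) := by
    simpa [sub_eq_add_neg] using rpow_one_add_le_one_add_mul_self (s := -z) (p := 2 * β)
      (by linarith) (by linarith) (by linarith)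
  refine le_of_mul_le_mul_left ?_ (by linarith : 0 < 2 * β)
  calc 2 * β * Real.log (1 - z) = Real.log ((1 - z) ^ (2 * β)) :=
        (Real.log_rpow (by linarith) _).symm
    _ ≤ Real.log (1 + -(2 * β * z)) :=
        Real.log_le_log (Real.rpow_pos_of_pos (by linarith) _) hbernoulli
    _ ≤ -(2 * β * z) - (-(2 * β * z)) ^ 2 / 4 := log_one_add_le_sub_sq_div_four hsmall
    _ = 2 * β * (-z - β / 2 * z ^ 2) := by ring

end Logarithm

section Convexity

theorem convexOn_finset_sum {E κ : Type*} [AddCommGroup E] [Module ℝ E] {S : Set E}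
    (hS : Convex ℝ S) (s : Finset κ) {f : κ → E → ℝ} (hf : ∀ i ∈ s, ConvexOn ℝ S (f i)) :
    ConvexOn ℝ S fun p => ∑ i ∈ s, f i p := by
  refine ⟨hS, fun p hp q hq a b ha hb hab => ?_⟩
  rw [Finset.smul_sum, Finset.smul_sum, ← Finset.sum_add_distrib]
  exact Finset.sum_le_sum fun i hi => (hf i hi).2 hp hq ha hb hab

theorem convex_setOf_forall_pos {ι : Type*} : Convex ℝ {p : ι → ℝ | ∀ i, 0 < p i} := by
  simpa [Set.pi] using convex_pi fun i (_ : i ∈ Set.univ) => convex_Ioi (0 : ℝ)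

end Convexity

section Bregman

variable {E : Type*} [NormedAddCommGroup E] [NormedSpace ℝ E] {S : Set E}
  {ψ : E → ℝ} {ψ' : E → StrongDual ℝ E} {x y u : E}

theorem fderiv_apply_sub_le_sub_of_convexOn {L : StrongDual ℝ E} (hψ : ConvexOn ℝ S ψ)
    (hL : HasFDerivWithinAt ψ L S x) (hx : x ∈ S) (hy : y ∈ S) : L (y - x) ≤ ψ y - ψ x := by
  have hmaps : Set.MapsTo (AffineMap.lineMap x y) (Set.Icc (0 : ℝ) 1) S :=
    hψ.1.mapsTo_lineMap hx hy
  have hconv : ConvexOn ℝ (Set.Icc 0 1) (ψ ∘ AffineMap.lineMap (k := ℝ) x y) :=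
    (hψ.comp_affineMap _).subset hmaps (convex_Icc 0 1)
  have hderiv : HasDerivWithinAt (ψ ∘ AffineMap.lineMap (k := ℝ) x y) (L (y - x))
      (Set.Icc 0 1) 0 :=
    HasFDerivWithinAt.comp_hasDerivWithinAt 0 (by simpa using hL)
      AffineMap.hasDerivAt_lineMap.hasDerivWithinAt hmaps
  simpa [slope_def_field] using hconv.le_slope_of_hasDerivWithinAt
    (Set.left_mem_Icc.mpr zero_le_one) (Set.right_mem_Icc.mpr zero_le_one) zero_lt_one hderiv

/-- The Bregman divergence `D_ψ(p, q)`. The derivative is a parameter `ψ'` rather than `fderiv ℝ ψ`,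
so that an explicit formula for it can be used. -/
def bregmanDiv (ψ : E → ℝ) (ψ' : E → StrongDual ℝ E) (p q : E) : ℝ :=
  ψ p - ψ q - ψ' q (p - q)

theorem bregmanDiv_nonneg (hψ : ConvexOn ℝ S ψ) (hψ' : HasFDerivWithinAt ψ (ψ' x) S x)
    (hx : x ∈ S) (hy : y ∈ S) : 0 ≤ bregmanDiv ψ ψ' y x :=
  sub_nonneg.mpr (fderiv_apply_sub_le_sub_of_convexOn hψ hψ' hx hy)

theorem bregmanDiv_three_point (ψ : E → ℝ) (ψ' : E → StrongDual ℝ E) (u x y : E) :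
    (ψ' y - ψ' x) (u - y) = bregmanDiv ψ ψ' u x - bregmanDiv ψ ψ' u y - bregmanDiv ψ ψ' y x := by
  simp only [bregmanDiv, sub_apply, map_sub]
  ring

theorem hasFDerivWithinAt_bregmanDiv_left (x : E) (hψ' : HasFDerivWithinAt ψ (ψ' y) S y) :
    HasFDerivWithinAt (fun p => bregmanDiv ψ ψ' p x) (ψ' y - ψ' x) S y :=
  (hψ'.sub_const (ψ x)).sub
    ((ψ' x).hasFDerivWithinAt.comp y ((hasFDerivWithinAt_id y S).sub_const x) (Set.mapsTo_univ _ _))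

theorem apply_sub_le_bregmanDiv_of_isMinOn {g : StrongDual ℝ E} (hS : Convex ℝ S)
    (hψ' : HasFDerivWithinAt ψ (ψ' y) S y) (hy : y ∈ S) (hu : u ∈ S)
    (hmin : IsMinOn (fun p => g p + bregmanDiv ψ ψ' p x) S y) :
    g (y - u) ≤ bregmanDiv ψ ψ' u x - bregmanDiv ψ ψ' u y - bregmanDiv ψ ψ' y x := by
  have hopt : 0 ≤ (g + (ψ' y - ψ' x)) (u - y) :=
    hmin.localize.hasFDerivWithinAt_nonneg
      (g.hasFDerivWithinAt.add (hasFDerivWithinAt_bregmanDiv_left x hψ'))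
      (sub_mem_posTangentConeAt_of_segment_subset (hS.segment_subset hy hu))
  rw [add_apply, bregmanDiv_three_point, ← neg_sub y u, map_neg] at hopt
  linarith

end Bregman

section Regularizer

open Matrix

theorem posSemidef_of_rank_one_updates {ι : Type*} [Finite ι] {A : ℕ → Matrix ι ι ℝ} {g : ℕ → ι → ℝ}
    {T : ℕ} (hA0 : (A 0).PosSemidef)
    (hA : ∀ t ∈ Finset.Icc 1 T, A t = A (t - 1) + vecMulVec (g t) (g t)) :
    ∀ t ≤ T, (A t).PosSemidef := by
  intro t ht
  induction t with
  | zero => exact hA0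
  | succ k ih =>
    rw [hA (k + 1) (Finset.mem_Icc.mpr ⟨by lia, ht⟩), Nat.add_sub_cancel]
    exact (ih (by lia)).add (by simpa using posSemidef_vecMulVec_self_star (g (k + 1)))

variable {ι : Type*} [Fintype ι] {M : Matrix ι ι ℝ} {w : ι → ℝ}

/-- The functional `p ↦ ⟨v, p⟩`, linear in `v`; it turns a gradient vector into a Fréchet
derivative. -/
noncomputable def dotProductCLM : (ι → ℝ) →ₗ[ℝ] StrongDual ℝ (ι → ℝ) :=
  LinearMap.toContinuousLinearMap.toLinearMap ∘ₗ dotProductBilin ℝ ℝ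

theorem dotProductCLM_apply (v p : ι → ℝ) : dotProductCLM v p = v ⬝ᵥ p := rfl

theorem sum_sum_mul_mul_eq_dotProduct_mulVec {R m n : Type*} [NonUnitalSemiring R] [Fintype m]
    [Fintype n] (M : Matrix m n R) (p : m → R) (q : n → R) :
    ∑ i, ∑ j, p i * M i j * q j = p ⬝ᵥ M *ᵥ q := by
  simp only [dotProduct, mulVec, Finset.mul_sum, mul_assoc]

theorem convexOn_dotProduct_mulVec_self (hM : M.PosSemidef) :
    ConvexOn ℝ Set.univ fun p : ι → ℝ => p ⬝ᵥ M *ᵥ p := by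
  refine ⟨convex_univ, fun p _ q _ a b ha hb hab => ?_⟩
  have hgap : a • (p ⬝ᵥ M *ᵥ p) + b • (q ⬝ᵥ M *ᵥ q) - (a • p + b • q) ⬝ᵥ M *ᵥ (a • p + b • q)
      = a * b * ((p - q) ⬝ᵥ M *ᵥ (p - q)) := by
    obtain rfl : b = 1 - a := by linarith
    simp only [mulVec_add, mulVec_sub, mulVec_smul, add_dotProduct, sub_dotProduct,
      dotProduct_add, dotProduct_sub, smul_dotProduct, dotProduct_smul, smul_eq_mul]
    ring
  have hpsd : 0 ≤ (p - q) ⬝ᵥ M *ᵥ (p - q) := hM.dotProduct_mulVec_nonneg (p - q)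
  exact sub_nonneg.mp (hgap ▸ mul_nonneg (mul_nonneg ha hb) hpsd)

theorem hasFDerivAt_dotProduct_mulVec_self (hM : M.IsSymm) (q : ι → ℝ) :
    HasFDerivAt (fun p => p ⬝ᵥ M *ᵥ p) (dotProductCLM ((2 : ℝ) • M *ᵥ q)) q := by
  have hmul : ∀ i, HasFDerivAt (fun p : ι → ℝ => (M *ᵥ p) i) (dotProductCLM (M i)) q :=
    fun i => (dotProductCLM (M i)).hasFDerivAt
  have hprod := HasFDerivAt.fun_sum (u := Finset.univ) fun i _ =>
    (hasFDerivAt_apply i q).mul (hmul i)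
  refine hprod.congr_fderiv (ContinuousLinearMap.ext fun v => ?_)
  have hswap : q ⬝ᵥ M *ᵥ v = (M *ᵥ q) ⬝ᵥ v := by
    rw [dotProduct_mulVec, ← mulVec_transpose, hM.eq]
  calc (∑ i, (q i • dotProductCLM (M i) + (M *ᵥ q) i • ContinuousLinearMap.proj i :
        StrongDual ℝ (ι → ℝ))) v
      = q ⬝ᵥ M *ᵥ v + (M *ᵥ q) ⬝ᵥ v := by
        simp [Finset.sum_add_distrib, dotProductCLM_apply, dotProduct, mulVec]
    _ = ((2 : ℝ) • M *ᵥ q) ⬝ᵥ v := by rw [hswap, smul_dotProduct, smul_eq_mul, two_mul]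

theorem convexOn_sum_mul_log_one_div (hw : ∀ i, 0 ≤ w i) :
    ConvexOn ℝ {p : ι → ℝ | ∀ i, 0 < p i} fun p => ∑ i, w i * Real.log (1 / p i) := by
  simp only [one_div, Real.log_inv]
  refine convexOn_finset_sum convex_setOf_forall_pos _ fun i _ => ?_
  have hlog : ConvexOn ℝ (Set.Ioi 0) fun z => -Real.log z := strictConcaveOn_log_Ioi.concaveOn.neg
  have hcoord : ConvexOn ℝ {p : ι → ℝ | ∀ i, 0 < p i} fun p => -Real.log (p i) :=
    (hlog.comp_linearMap (LinearMap.proj i : (ι → ℝ) →ₗ[ℝ] ℝ)).subset (fun _ hp => hp i)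
      convex_setOf_forall_pos
  exact hcoord.smul (hw i)

theorem hasFDerivAt_sum_mul_log_one_div (w : ι → ℝ) {q : ι → ℝ} (hq : ∀ i, q i ≠ 0) :
    HasFDerivAt (fun p : ι → ℝ => ∑ i, w i * Real.log (1 / p i))
      (dotProductCLM fun i => -(w i * (1 / q i))) q := by
  simp only [one_div, Real.log_inv]
  have hsum := HasFDerivAt.fun_sum (u := Finset.univ) fun i _ =>
    (((hasFDerivAt_apply i q).log (hq i)).neg).const_mul (w i)
  refine hsum.congr_fderiv (ContinuousLinearMap.ext fun v => ?_)
  simp [dotProductCLM_apply, dotProduct, mul_assoc]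

/-- The BARRONS regularizer `ψ_t`, with `M` in the role of `A_t` and `w i` in that of
`1 / η_{t,i}`. -/
noncomputable def quadLogBarrier (β : ℝ) (M : Matrix ι ι ℝ) (w p : ι → ℝ) : ℝ :=
  β / 2 * ∑ i, ∑ j, p i * M i j * p j + ∑ i, w i * Real.log (1 / p i)

/-- The gradient `∇ψ_t` of the BARRONS regularizer, for symmetric `M` and `p` without zero
entries. -/
noncomputable def quadLogBarrierGrad (β : ℝ) (M : Matrix ι ι ℝ) (w p : ι → ℝ) (i : ι) : ℝ :=
  β * (∑ j, M i j * p j) - w i * (1 / p i)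

theorem convexOn_quadLogBarrier {β : ℝ} (hβ : 0 ≤ β) (hM : M.PosSemidef) (hw : ∀ i, 0 ≤ w i) :
    ConvexOn ℝ {p : ι → ℝ | ∀ i, 0 < p i} (quadLogBarrier β M w) := by
  have hquad := ((convexOn_dotProduct_mulVec_self hM).smul (div_nonneg hβ zero_le_two)).subset
    (Set.subset_univ _) convex_setOf_forall_pos
  simp only [← sum_sum_mul_mul_eq_dotProduct_mulVec] at hquad
  exact hquad.add (convexOn_sum_mul_log_one_div hw)

theorem hasFDerivAt_quadLogBarrier (β : ℝ) (hM : M.IsSymm) (w : ι → ℝ) {q : ι → ℝ}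
    (hq : ∀ i, q i ≠ 0) :
    HasFDerivAt (quadLogBarrier β M w) (dotProductCLM (quadLogBarrierGrad β M w q)) q := by
  have hgrad : quadLogBarrierGrad β M w q
      = (β / 2) • (2 : ℝ) • M *ᵥ q + fun i => -(w i * (1 / q i)) := by
    ext i
    simp only [quadLogBarrierGrad, mulVec, dotProduct, Pi.add_apply, Pi.smul_apply, smul_eq_mul]
    ring
  have hsum := ((hasFDerivAt_dotProduct_mulVec_self hM q).const_mul (β / 2)).add
    (hasFDerivAt_sum_mul_log_one_div w hq)
  simp only [← sum_sum_mul_mul_eq_dotProduct_mulVec] at hsum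
  rw [hgrad, map_add, map_smul]
  exact hsum

end Regularizer

section Regret

open Matrix

variable {ι : Type*} [Fintype ι]

/-- The truncated simplex `{p ∈ Δ : p_i ≥ m}`; the paper's `Δ̄_N` is the case `m = 1 / (N T)`. -/
def truncatedSimplex (ι : Type*) [Fintype ι] (m : ℝ) : Set (ι → ℝ) :=
  {p | (∀ i, 0 ≤ p i) ∧ ∑ i, p i = 1 ∧ ∀ i, m ≤ p i}

theorem convex_truncatedSimplex (m : ℝ) : Convex ℝ (truncatedSimplex ι m) := by
  have hinter : truncatedSimplex ι m = stdSimplex ℝ ι ∩ Set.Ici fun _ => m :=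
    Set.ext fun _ => and_assoc.symm
  exact hinter ▸ (convex_stdSimplex ℝ ι).inter (convex_Ici _)

theorem dotProduct_pos_of_forall_pos_of_nonneg {R : Type*} [Semiring R] [PartialOrder R]
    [IsStrictOrderedRing R] {p v : ι → R} (hp : ∀ i, 0 < p i) (hv : ∀ i, 0 ≤ v i)
    (hv_pos : ∃ i, 0 < v i) : 0 < p ⬝ᵥ v :=
  let ⟨k, hk⟩ := hv_pos
  Finset.sum_pos' (fun i _ => mul_nonneg (hp i).le (hv i))
    ⟨k, Finset.mem_univ k, mul_pos (hp k) hk⟩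

theorem neg_log_dotProduct_sub_le {β : ℝ} (hβ0 : 0 < β) (hβ : β ≤ 1 / 2) {r p u g : ι → ℝ}
    (hp : 0 < p ⬝ᵥ r) (hu : 0 < u ⬝ᵥ r) (hg : ∀ i, g i = -(r i) / (p ⬝ᵥ r))
    (hsmall : 8 * β * |g ⬝ᵥ (u - p)| ≤ 1) :
    -Real.log (p ⬝ᵥ r) - -Real.log (u ⬝ᵥ r) ≤ g ⬝ᵥ (p - u) - β / 2 * (g ⬝ᵥ (p - u)) ^ 2 := by
  have hg' : g = -(p ⬝ᵥ r)⁻¹ • r := by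
    ext i
    rw [hg, Pi.smul_apply, smul_eq_mul]
    ring
  have hratio : 1 - g ⬝ᵥ (u - p) = (u ⬝ᵥ r) / (p ⬝ᵥ r) := by
    rw [hg', smul_dotProduct, dotProduct_sub, dotProduct_comm r u, dotProduct_comm r p, smul_eq_mul]
    field_simp
    ring
  have hlog := log_one_sub_le_neg_sub_sq hβ0 hβ (z := g ⬝ᵥ (u - p))
    (by linarith [div_pos hu hp]) hsmall
  rw [hratio, Real.log_div hu.ne' hp.ne'] at hlog
  rw [← neg_sub u p, dotProduct_neg, neg_sq]
  linarith

theorem barrons_first_step_general {T : ℕ} {β : ℝ} (hβ0 : 0 < β) (hβ : β ≤ 1 / 2)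
    {S : Set (ι → ℝ)} (hS : Convex ℝ S) {r x grad : ℕ → ι → ℝ}
    (hr : ∀ t ∈ Finset.Icc 1 T, ∀ p ∈ S, 0 < p ⬝ᵥ r t)
    (hx : ∀ t ∈ Finset.Icc 1 (T + 1), x t ∈ S)
    (hgrad : ∀ t ∈ Finset.Icc 1 T, ∀ i, grad t i = -(r t i) / (x t ⬝ᵥ r t))
    {psi : ℕ → (ι → ℝ) → ℝ} {gpsi : ℕ → (ι → ℝ) → ι → ℝ} {D : ℕ → (ι → ℝ) → (ι → ℝ) → ℝ}
    (hpsi : ∀ t ∈ Finset.Icc 1 T, ConvexOn ℝ S (psi t))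
    (hgpsi : ∀ t ∈ Finset.Icc 1 T, ∀ p ∈ S,
      HasFDerivWithinAt (psi t) (dotProductCLM (gpsi t p)) S p)
    (hD : ∀ t p q, D t p q = psi t p - psi t q - gpsi t q ⬝ᵥ (p - q))
    (hmin : ∀ t ∈ Finset.Icc 1 T,
      IsMinOn (fun p => p ⬝ᵥ grad t + D t p (x t)) S (x (t + 1)))
    {u : ι → ℝ} (hu : u ∈ S)
    (halpha : ∀ t ∈ Finset.Icc 1 T, 8 * β * |grad t ⬝ᵥ (u - x t)| ≤ 1) :
    (∑ t ∈ Finset.Icc 1 T, -Real.log (x t ⬝ᵥ r t)) - ∑ t ∈ Finset.Icc 1 T, -Real.log (u ⬝ᵥ r t)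
    ≤ ∑ t ∈ Finset.Icc 1 T, (grad t ⬝ᵥ (x t - x (t + 1)) + D t u (x t) - D t u (x (t + 1))
        - β / 2 * (grad t ⬝ᵥ (x t - u)) ^ 2) := by
  rw [← Finset.sum_sub_distrib]
  refine Finset.sum_le_sum fun t ht => ?_
  obtain ⟨ht1, htT⟩ := Finset.mem_Icc.mp ht
  have hxt : x t ∈ S := hx t (Finset.mem_Icc.mpr ⟨ht1, by lia⟩)
  have hxt' : x (t + 1) ∈ S := hx (t + 1) (Finset.mem_Icc.mpr ⟨by lia, by lia⟩)
  have hbreg : D t = bregmanDiv (psi t) fun q => dotProductCLM (gpsi t q) :=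
    funext₂ (hD t)
  have hnonneg : 0 ≤ D t (x (t + 1)) (x t) :=
    hbreg ▸ bregmanDiv_nonneg (hpsi t ht) (hgpsi t ht _ hxt) hxt hxt'
  have hdescent : grad t ⬝ᵥ (x (t + 1) - u)
      ≤ D t u (x t) - D t u (x (t + 1)) - D t (x (t + 1)) (x t) := by
    have hmin_t := hmin t ht
    simp only [dotProduct_comm _ (grad t), hbreg] at hmin_t ⊢
    exact apply_sub_le_bregmanDiv_of_isMinOn (g := dotProductCLM (grad t)) hS
      (hgpsi t ht _ hxt') hxt' hu hmin_t
  have hlog := neg_log_dotProduct_sub_le hβ0 hβ (hr t ht _ hxt) (hr t ht u hu) (hgrad t ht)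
    (halpha t ht)
  have hsplit : grad t ⬝ᵥ (x t - u)
      = grad t ⬝ᵥ (x t - x (t + 1)) + grad t ⬝ᵥ (x (t + 1) - u) := by
    rw [← dotProduct_add, sub_add_sub_cancel]
  linarith

end Regret

/- STATEMENT 1: first-step regret inequality for BARRONS (Lemma 4 of the paper).
   The BARRONS iterates are specified by hypotheses encoding their defining equations. -/

theorem barrons_first_step
    (N T : ℕ) (hN : 2 ≤ N) (hT : N < T)
    (β η : ℝ) (hβ0 : 0 < β) (hβ : β ≤ 1 / 2) (hη0 : 0 < η) (hη : η ≤ 1)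
    -- reward vectors: nonnegative with maximum coordinate equal to 1
    (r : ℕ → Fin N → ℝ)
    (hr : ∀ t ∈ Finset.Icc 1 T, (∀ i, 0 ≤ r t i) ∧ (∃ i, r t i = 1) ∧ ∀ i, r t i ≤ 1)
    -- the iterates x_1, ..., x_{T+1}
    (x : ℕ → Fin N → ℝ)
    (hx1 : ∀ i, x 1 i = 1 / N)
    (hxmem : ∀ t ∈ Finset.Icc 1 (T + 1),
        (∀ i, 0 ≤ x t i) ∧ (∑ i, x t i) = 1 ∧ ∀ i, 1 / ((N : ℝ) * T) ≤ x t i)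
    -- the gradients ∇_t = -r_t / ⟨x_t, r_t⟩
    (grad : ℕ → Fin N → ℝ)
    (hgrad : ∀ t i, grad t i = -(r t i) / ∑ j, x t j * r t j)
    -- the matrices A_t
    (A : ℕ → Matrix (Fin N) (Fin N) ℝ)
    (hA0 : A 0 = (N : ℝ) • (1 : Matrix (Fin N) (Fin N) ℝ))
    (hA : ∀ t ∈ Finset.Icc 1 T, ∀ i j, A t i j = A (t - 1) i j + grad t i * grad t j)
    -- the individual learning rates η_{t,i}
    (eta : ℕ → Fin N → ℝ)
    (heta : ∀ t ∈ Finset.Icc 1 T, ∀ i,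
        eta t i = η * Real.exp (⨆ s ∈ Finset.Icc 1 t,
          Real.log (1 / ((N : ℝ) * x s i)) / Real.log T))
    -- the regularizer ψ_t, its gradient, and its Bregman divergence
    (psi : ℕ → (Fin N → ℝ) → ℝ)
    (hpsi : ∀ t p, psi t p =
        β / 2 * ∑ i, ∑ j, p i * A t i j * p j + ∑ i, (1 / eta t i) * Real.log (1 / p i))
    (gpsi : ℕ → (Fin N → ℝ) → Fin N → ℝ)
    (hgpsi : ∀ t p i, gpsi t p i = β * (∑ j, A t i j * p j) - (1 / eta t i) * (1 / p i))
    (D : ℕ → (Fin N → ℝ) → (Fin N → ℝ) → ℝ)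
    (hD : ∀ t p q, D t p q = psi t p - psi t q - ∑ i, gpsi t q i * (p i - q i))
    -- x_{t+1} minimizes ⟨x, ∇_t⟩ + D_{ψ_t}(x, x_t) over Δ̄_N
    (hmin : ∀ t ∈ Finset.Icc 1 T, ∀ y : Fin N → ℝ,
        ((∀ i, 0 ≤ y i) ∧ (∑ i, y i) = 1 ∧ ∀ i, 1 / ((N : ℝ) * T) ≤ y i) →
        (∑ i, x (t + 1) i * grad t i) + D t (x (t + 1)) (x t)
          ≤ (∑ i, y i * grad t i) + D t y (x t))
    -- the comparator u ∈ Δ̄_N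
    (u : Fin N → ℝ)
    (hu : (∀ i, 0 ≤ u i) ∧ (∑ i, u i) = 1 ∧ ∀ i, 1 / ((N : ℝ) * T) ≤ u i)
    -- β ≤ α_T(u), i.e. β ≤ 1/2 (above) and β ≤ 1/(8|⟨∇_s, u - x_s⟩|) for all s ∈ [T]
    (halpha : ∀ s ∈ Finset.Icc 1 T, 8 * β * |∑ i, grad s i * (u i - x s i)| ≤ 1) :
    (∑ t ∈ Finset.Icc 1 T, -Real.log (∑ i, x t i * r t i))
      - ∑ t ∈ Finset.Icc 1 T, -Real.log (∑ i, u i * r t i)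
    ≤ ∑ t ∈ Finset.Icc 1 T,
        ((∑ i, grad t i * (x t i - x (t + 1) i))
          + D t u (x t) - D t u (x (t + 1))
          - β / 2 * (∑ i, grad t i * (x t i - u i)) ^ 2) := by
  have hm : 0 < 1 / ((N : ℝ) * T) :=
    one_div_pos.mpr (mul_pos (Nat.cast_pos.mpr (by lia)) (Nat.cast_pos.mpr (by lia)))
  have hpos : ∀ p ∈ truncatedSimplex (Fin N) (1 / ((N : ℝ) * T)), ∀ i, 0 < p i :=
    fun p hp i => hm.trans_le (hp.2.2 i)
  have hApsd : ∀ t ∈ Finset.Icc 1 T, (A t).PosSemidef := fun t ht =>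
    posSemidef_of_rank_one_updates (hA0 ▸ Matrix.PosSemidef.one.smul N.cast_nonneg)
      (fun s hs => Matrix.ext (hA s hs)) t (Finset.mem_Icc.mp ht).2
  have heta_nonneg : ∀ t ∈ Finset.Icc 1 T, ∀ i, 0 ≤ 1 / eta t i := fun t ht i => by
    rw [heta t ht i]
    positivity
  have hpsi_eq : ∀ t, psi t = quadLogBarrier β (A t) fun i => 1 / eta t i :=
    fun t => funext (hpsi t)
  have hgpsi_eq : ∀ t p, gpsi t p = quadLogBarrierGrad β (A t) (fun i => 1 / eta t i) p :=
    fun t p => funext (hgpsi t p)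
  refine barrons_first_step_general hβ0 hβ (convex_truncatedSimplex _)
    (fun t ht p hp => ?_) hxmem (fun t _ => hgrad t) (fun t ht => ?_)
    (fun t ht p hp => ?_) hD hmin hu halpha
  · obtain ⟨hr_nonneg, ⟨k, hk⟩, -⟩ := hr t ht
    exact dotProduct_pos_of_forall_pos_of_nonneg (hpos p hp) hr_nonneg ⟨k, hk ▸ one_pos⟩
  · exact hpsi_eq t ▸ (convexOn_quadLogBarrier hβ0.le (hApsd t ht) (heta_nonneg t ht)).subset
      hpos (convex_truncatedSimplex _)
  · rw [hpsi_eq, hgpsi_eq]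
    exact (hasFDerivAt_quadLogBarrier β (hApsd t ht).isHermitian _
      fun i => (hpos p hp i).ne').hasFDerivWithinAt
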